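/- Let 𝓕 be a non-empty quasi-finite family of finite graphs, each having at least one edge. Then for each integer r ≥ 1 there exists a set S_r of residue classes modulo r (each residue class viewed as a subset of the non-negative integers), and for each class C ∈ S_r an integer k_C, such that: (a) for every integer r ≥ 1 and every class C ∈ S_r, sat(n,𝓕) = ((r−1)·n + k_C)/r for all sufficiently large n that lie in C but lie in no class D ∈ S_q for any q < r; (b) there is a function g : ℤ_{≥0} → ℝ with g(n)/n → 0 such that sat(n,𝓕) ≥ n − g(n) for every n ≥ 0 that lies in no class of any S_r; (c) for each r ∈ {1,2,3,4,5,7}, S_r is either empty or consists of all r residue classes modulo r. -/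

import Mathlib

open SimpleGraph Filter Topology

/-- `H` (on `β`) is contained in `G` (on `α`): `G` has a subgraph isomorphic to `H`. -/
def Contains {α β : Type*} (G : SimpleGraph α) (H : SimpleGraph β) : Prop :=
  ∃ f : β ↪ α, ∀ a b : β, H.Adj a b → G.Adj (f a) (f b)

/-- A family of finite graphs, each given on a vertex set `Fin n`. -/
abbrev GraphFam := Set ((n : ℕ) × SimpleGraph (Fin n))

/-- `G` is `𝓕`-saturated: `G` contains no member of `𝓕`, but adding any missing edge to `G`
creates a member of `𝓕`. -/
def FamSaturated (𝓕 : GraphFam) {α : Type*} (G : SimpleGraph α) : Prop :=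
  (∀ F ∈ 𝓕, ¬ Contains G F.2) ∧
    ∀ u v : α, u ≠ v → ¬ G.Adj u v →
      ∃ F ∈ 𝓕, Contains (G ⊔ SimpleGraph.fromEdgeSet {s(u, v)}) F.2

/-- `sat n 𝓕` is the minimum number of edges in an `𝓕`-saturated graph on `n` vertices. -/
noncomputable def sat (n : ℕ) (𝓕 : GraphFam) : ℕ :=
  sInf {m | ∃ G : SimpleGraph (Fin n), FamSaturated 𝓕 G ∧ Nat.card G.edgeSet = m}

/-- `𝓕` is quasi-finite: for every tree `T` there is a constant `C` such that every graph in `𝓕`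
has at most `C` connected components isomorphic to `T`. -/
def QuasiFinite (𝓕 : GraphFam) : Prop :=
  ∀ (t : ℕ) (T : SimpleGraph (Fin t)), T.IsTree →
    ∃ C : ℕ, ∀ F ∈ 𝓕,
      Nat.card {c : F.2.ConnectedComponent // Nonempty (SimpleGraph.induce c.supp F.2 ≃g T)} ≤ C

/-- `C` is a residue class modulo `r`, viewed as a subset of the non-negative integers. -/
def ResidueClass (r : ℕ) (C : Set ℕ) : Prop := ∃ c < r, C = {n : ℕ | n % r = c}

/-!
Let `T` be a tree of order `r`. By quasi-finiteness, in an `𝓕`-saturated graph with many components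
isomorphic to `T` the number of these components can be changed without affecting saturation, as
long as it stays large. Hence, along a residue class modulo `r` in which such graphs exist, the
excess `r * sat n 𝓕 - (r - 1) * n` is bounded above; it is eventually nonincreasing, because minimal
graphs themselves contain many copies of some tree of order `r`, and bounded below, so it is
eventually constant. If `n` is in no such class, then a minimal graph has boundedly many components
that are trees of order `r`, for every `r`, which forces `n - o(n)` edges.

For (c), add a disjoint subgraph `U ⊑ T` to a saturated graph with many copies of `T`, and add edges
until the graph is saturated. If attaching copies of `T` to a vertex `u` of `U` always yields a copy
of `T` through `u`, then few of the copies of `T` get attached, and the others show that the residue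
class moved by the order of `U`. When this order is coprime to `r`, all classes are reached. A
single vertex works as `U` for most small trees and a tree on six vertices for the remaining ones.
-/

section Saturation

variable {𝓕 : GraphFam} {V V' W : Type*} {G : SimpleGraph V} {G' : SimpleGraph V'}

theorem contains_iff_isContained {H : SimpleGraph W} : Contains G H ↔ H ⊑ G :=
  ⟨fun ⟨f, hf⟩ => ⟨⟨f, hf _ _⟩, f.injective⟩,
    fun ⟨f⟩ => ⟨f.toEmbedding, fun _ _ => f.toHom.map_adj⟩⟩

/-- `G` contains no member of `𝓕`. -/
def FamFree (𝓕 : GraphFam) (G : SimpleGraph V) : Prop := ∀ F ∈ 𝓕, F.2.Free G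

theorem FamFree.of_isContained (h : FamFree 𝓕 G') (hG : G ⊑ G') : FamFree 𝓕 G :=
  fun F hF hFG => h F hF (hFG.trans hG)

theorem famSaturated_iff : FamSaturated 𝓕 G ↔
    FamFree 𝓕 G ∧ ∀ u v, u ≠ v → ¬ G.Adj u v → ¬ FamFree 𝓕 (G ⊔ edge u v) := by
  simp only [FamSaturated, FamFree, contains_iff_isContained, Free, edge, not_forall, not_not,
    exists_prop]

theorem famSaturated_iff_maximal : FamSaturated 𝓕 G ↔ Maximal (FamFree 𝓕) G := by
  rw [famSaturated_iff]
  refine ⟨fun ⟨hfree, hsat⟩ => ⟨hfree, fun H hH hGH u v huv => ?_⟩,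
    fun hmax => ⟨hmax.prop, fun u v hne huv hfree => ?_⟩⟩
  · by_contra hG
    have hle : G ⊔ edge u v ≤ H := sup_le hGH ((edge_le_iff _).2 (.inr huv))
    exact hsat u v huv.ne hG (hH.of_isContained (.of_le hle))
  · exact huv (hmax.le_of_ge hfree le_sup_left (by simp [edge_adj, hne]))

theorem FamSaturated.famFree (h : FamSaturated 𝓕 G) : FamFree 𝓕 G := (famSaturated_iff.1 h).1

theorem FamSaturated.not_famFree_sup_edge (h : FamSaturated 𝓕 G) {u v : V} (hne : u ≠ v)
    (huv : ¬ G.Adj u v) : ¬ FamFree 𝓕 (G ⊔ edge u v) := (famSaturated_iff.1 h).2 u v hne huv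

theorem FamFree.exists_le_famSaturated [Finite V] (h : FamFree 𝓕 G) :
    ∃ H : SimpleGraph V, G ≤ H ∧ FamSaturated 𝓕 H := by
  simp only [famSaturated_iff_maximal]
  exact (Set.toFinite {H : SimpleGraph V | FamFree 𝓕 H}).exists_le_maximal h

theorem FamSaturated.comap_eq (h : FamSaturated 𝓕 G) (h' : FamFree 𝓕 G') (f : V ↪ V')
    (hle : G ≤ G'.comap f) : G'.comap f = G :=
  ((famSaturated_iff_maximal.1 h).eq_of_le
    (h'.of_isContained ⟨(Embedding.comap f G').toCopy⟩) hle).symm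

theorem sup_edge_isContained_sup_edge (f : Copy G G') (u v : V) :
    G ⊔ edge u v ⊑ G' ⊔ edge (f u) (f v) := by
  refine ⟨⟨⟨f, fun {a b} hab => ?_⟩, f.injective⟩⟩
  simp only [sup_adj, edge_adj] at hab ⊢
  rcases hab with hab | ⟨⟨rfl, rfl⟩ | ⟨rfl, rfl⟩, hne⟩
  · exact .inl (f.toHom.map_adj hab)
  · exact .inr ⟨.inl ⟨rfl, rfl⟩, f.injective.ne hne⟩
  · exact .inr ⟨.inr ⟨rfl, rfl⟩, f.injective.ne hne⟩

theorem FamSaturated.of_iso (h : FamSaturated 𝓕 G) (e : G ≃g G') : FamSaturated 𝓕 G' := by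
  refine famSaturated_iff.2 ⟨h.famFree.of_isContained e.symm.isContained,
    fun u v hne huv hfree => ?_⟩
  refine h.not_famFree_sup_edge (e.symm.injective.ne hne) (e.symm.map_adj_iff.not.2 huv)
    (hfree.of_isContained ?_)
  simpa using sup_edge_isContained_sup_edge e.toCopy (e.symm u) (e.symm v)

theorem sat_le_of_famSaturated [Finite V] (h : FamSaturated 𝓕 G) :
    sat (Nat.card V) 𝓕 ≤ Nat.card G.edgeSet := by
  let e : G ≃g G.map (Finite.equivFin V).toEmbedding := Iso.map (Finite.equivFin V) G
  exact Nat.sInf_le ⟨_, h.of_iso e, (Nat.card_congr e.mapEdgeSet).symm⟩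

theorem exists_famSaturated_card_edgeSet_eq_sat (hne : ∀ F ∈ 𝓕, 1 ≤ Nat.card F.2.edgeSet) (n : ℕ) :
    ∃ G : SimpleGraph (Fin n), FamSaturated 𝓕 G ∧ Nat.card G.edgeSet = sat n 𝓕 := by
  have hbot : FamFree 𝓕 (⊥ : SimpleGraph (Fin n)) := fun F hF =>
    free_bot fun hF' => by simpa [hF'] using hne F hF
  obtain ⟨G, -, hG⟩ := hbot.exists_le_famSaturated
  exact Nat.sInf_mem (s := {m | ∃ G : SimpleGraph (Fin n), FamSaturated 𝓕 G ∧
    Nat.card G.edgeSet = m}) ⟨_, G, hG, rfl⟩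

end Saturation

section SmallTreeComponents

variable {V : Type*} {𝓕 : GraphFam}

/-- The connected components of `G` isomorphic to `T`. -/
abbrev ComponentsIso {W : Type*} (G : SimpleGraph V) (T : SimpleGraph W) : Type _ :=
  {c : G.ConnectedComponent // Nonempty (G.induce c.supp ≃g T)}

/-- The connected components of `G` that are trees with at most `R` vertices. -/
def smallTreeComponents (G : SimpleGraph V) (R : ℕ) : Set G.ConnectedComponent :=
  {c | (G.induce c.supp).IsTree ∧ Nat.card c.supp ≤ R}

theorem ncard_smallTreeComponents_le [Finite V] (G : SimpleGraph V) (R : ℕ)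
    (B : ∀ t, SimpleGraph (Fin t) → ℕ)
    (hB : ∀ t ≤ R, ∀ T : SimpleGraph (Fin t), T.IsTree →
      Nat.card (ComponentsIso G T) ≤ B t T) :
    (smallTreeComponents G R).ncard ≤ ∑ t : Fin (R + 1), ∑ T : SimpleGraph (Fin t), B t T := by
  let treeType (t : Fin (R + 1)) (T : SimpleGraph (Fin t)) : Set G.ConnectedComponent :=
    {c | T.IsTree ∧ Nonempty (G.induce c.supp ≃g T)}
  have hcover : smallTreeComponents G R ⊆ ⋃ t, ⋃ T, treeType t T := fun c ⟨htree, hcard⟩ => by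
    let e : G.induce c.supp ≃g (G.induce c.supp).map (Finite.equivFin c.supp).toEmbedding :=
      Iso.map (Finite.equivFin _) _
    exact Set.mem_iUnion₂.2 ⟨⟨_, Nat.lt_succ_of_le hcard⟩, _, e.isTree_iff.1 htree, ⟨e⟩⟩
  have htype (t T) : (treeType t T).ncard ≤ B t T := by
    by_cases hT : T.IsTree
    · simpa only [treeType, hT, true_and, Set.coe_ofPred, ← Nat.card_coe_set_eq] using
        hB t (Nat.le_of_lt_succ t.2) T hT
    · simp [treeType, hT]
  calc (smallTreeComponents G R).ncard
      ≤ (⋃ t, ⋃ T, treeType t T).ncard := Set.ncard_le_ncard hcover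
    _ ≤ ∑ t, (⋃ T, treeType t T).ncard := Set.ncard_iUnion_le_of_fintype _
    _ ≤ ∑ t : Fin (R + 1), ∑ T : SimpleGraph (Fin t), B t T := Finset.sum_le_sum fun t _ =>
        (Set.ncard_iUnion_le_of_fintype _).trans (Finset.sum_le_sum fun T _ => htype t T)

/-- Every member of `𝓕` has fewer than `K` tree components with at most `r` vertices. -/
def SmallTreeBound (𝓕 : GraphFam) (r K : ℕ) : Prop :=
  ∀ F ∈ 𝓕, (smallTreeComponents F.2 r).ncard < K

theorem QuasiFinite.exists_smallTreeBound (h : QuasiFinite 𝓕) (r : ℕ) :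
    ∃ K, SmallTreeBound 𝓕 r K := by
  choose! C hC using h
  exact ⟨_, fun F hF => Nat.lt_succ_of_le
    (ncard_smallTreeComponents_le F.2 r C fun t _ T hT => hC t T hT F hF)⟩

end SmallTreeComponents

section Copies

variable {𝓕 : GraphFam} {K : ℕ} {V X ι κ τ : Type*} {G : SimpleGraph V} {T : SimpleGraph τ}

/-- The disjoint union of `G` and copies of `T` indexed by `ι`. -/
abbrev withCopies (G : SimpleGraph V) (T : SimpleGraph τ) (ι : Type*) : SimpleGraph (V ⊕ ι × τ) :=
  G ⊕g ((⊥ : SimpleGraph ι) □ T)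

/-- The index of the copy of `T` in which a vertex of `withCopies G T ι` lies, if any. -/
def copyIndex : V ⊕ ι × τ → Option ι := Sum.elim (fun _ => none) fun p => some p.1

theorem copyIndex_eq_of_adj {v w : V ⊕ ι × τ} (h : (withCopies G T ι).Adj v w) :
    copyIndex v = copyIndex w := by
  rcases v with v | ⟨i, a⟩ <;> rcases w with w | ⟨j, b⟩ <;>
    simp_all [copyIndex, boxProd_adj]

theorem copyIndex_eq_of_reachable {C : SimpleGraph X} (f : C →g withCopies G T ι) {v w : X}
    (h : C.Reachable v w) : copyIndex (f v) = copyIndex (f w) := by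
  obtain ⟨p⟩ := h
  induction p with
  | nil => rfl
  | cons hadj _ ih => exact (copyIndex_eq_of_adj (f.map_adj hadj)).trans ih

theorem exists_eq_of_copyIndex_eq {v : V ⊕ ι × τ} {i : ι} (h : copyIndex v = some i) :
    ∃ a, v = .inr (i, a) := by
  rcases v with v | ⟨j, a⟩ <;> simp_all [copyIndex]

theorem isContained_of_copyIndex_eq {C : SimpleGraph X} (f : Copy C (withCopies G T ι)) {i : ι}
    (h : ∀ v, copyIndex (f v) = some i) : C ⊑ T := by
  choose a ha using fun v => exists_eq_of_copyIndex_eq (h v)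
  refine ⟨⟨⟨a, fun {v w} hvw => ?_⟩, fun v w hvw => f.injective ?_⟩⟩
  · simpa [ha, boxProd_adj] using f.toHom.map_adj hvw
  · change f v = f w
    rw [ha v, ha w, show a v = a w from hvw]

theorem isTree_of_isContained {C : SimpleGraph X} (hC : C.Connected) (hT : T.IsAcyclic)
    (h : C ⊑ T) : C.IsTree :=
  let ⟨f⟩ := h
  ⟨hC, hT.comap f.toHom f.injective⟩

/-- The indices of the copies of `T` that `f` meets. -/
def hitIndices {F : SimpleGraph X} (f : Copy F (withCopies G T ι)) : Set ι :=
  some ⁻¹' Set.range fun v => copyIndex (f v)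

-- A copy of `T` that is met contains the whole component of `F` meeting it.
theorem card_hitIndices_le [Finite X] {F : SimpleGraph X} (f : Copy F (withCopies G T ι))
    [Finite τ] (hT : T.IsAcyclic) :
    Nat.card (hitIndices f) ≤ (smallTreeComponents F (Nat.card τ)).ncard := by
  choose v hv using fun i : hitIndices f => i.2
  have hsmall (i) : F.connectedComponentMk (v i) ∈ smallTreeComponents F (Nat.card τ) := by
    set c := F.connectedComponentMk (v i)
    have hc : F.induce c.supp ⊑ T :=
      isContained_of_copyIndex_eq (f.comp (Embedding.induce c.supp).toCopy) fun w =>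
        (copyIndex_eq_of_reachable f.toHom (ConnectedComponent.exact w.2)).trans (hv i)
    exact ⟨isTree_of_isContained c.connected_toSimpleGraph hT hc,
      let ⟨g⟩ := hc; Nat.card_le_card_of_injective g g.injective⟩
  refine Nat.card_le_card_of_injective (fun i => (⟨_, hsmall i⟩ : smallTreeComponents F _))
    fun i j hij => Subtype.ext (Option.some_injective _ ?_)
  rw [← hv i, ← hv j]
  exact copyIndex_eq_of_reachable f.toHom (ConnectedComponent.exact (congrArg Subtype.val hij))

/-- The homomorphism between unions of copies that reindexes them along `σ`. -/
def reindexCopies (σ : κ → ι) : withCopies G T κ →g withCopies G T ι where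
  toFun := Sum.map id (Prod.map σ id)
  map_rel' {v w} h := by
    rcases v with v | p <;> rcases w with w | q <;> simp_all [boxProd_adj]

theorem injOn_reindexCopies {σ : κ → ι} {s : Set κ} (hσ : s.InjOn σ) :
    {v | ∀ i ∈ copyIndex v, i ∈ s}.InjOn (reindexCopies (G := G) (T := T) σ) := by
  rintro (v | ⟨i, a⟩) hv (w | ⟨j, b⟩) hw h
  · exact congrArg Sum.inl (Sum.inl_injective h)
  · cases h
  · cases h
  · obtain ⟨hij, rfl⟩ := Prod.mk.inj (Sum.inr_injective h)
    obtain rfl := hσ (hv i rfl) (hw j rfl) hij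
    rfl

theorem nonempty_embedding_of_card_le {α β : Type*} [Finite α] [Finite β]
    (h : Nat.card α ≤ Nat.card β) : Nonempty (α ↪ β) := by
  have := Fintype.ofFinite α
  have := Fintype.ofFinite β
  exact Function.Embedding.nonempty_of_card_le (by simpa using h)

theorem exists_injOn_of_card_le {s : Set κ} [Finite s] [Finite ι] [Nonempty ι]
    (h : Nat.card s ≤ Nat.card ι) : ∃ σ : κ → ι, s.InjOn σ := by
  obtain ⟨e⟩ := nonempty_embedding_of_card_le h
  refine ⟨Function.extend Subtype.val e fun _ => Classical.arbitrary ι, ?_⟩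
  rw [Set.injOn_iff_injective]
  convert e.injective
  exact funext fun i => Subtype.val_injective.extend_apply e _ i

theorem FamFree.withCopies_of_le_card (h : FamFree 𝓕 (withCopies G T ι)) [Finite τ]
    (hT : T.IsAcyclic) (hK : SmallTreeBound 𝓕 (Nat.card τ) K) (hι : K ≤ Nat.card ι) :
    FamFree 𝓕 (withCopies G T κ) := by
  rintro F hF ⟨f⟩
  have hlt : Nat.card (hitIndices f) < Nat.card ι :=
    ((card_hitIndices_le f hT).trans_lt (hK F hF)).trans_le hι
  obtain ⟨_, _⟩ := Nat.card_pos_iff.1 (Nat.zero_lt_of_lt hlt)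
  have : Finite (hitIndices f) :=
    (Set.finite_range _).preimage (Option.some_injective _).injOn
  obtain ⟨σ, hσ⟩ := exists_injOn_of_card_le hlt.le
  exact h F hF ⟨(reindexCopies σ).comp f.toHom, fun v w hvw => f.injective <|
    injOn_reindexCopies (G := G) (T := T) hσ (fun _ hi => ⟨v, hi⟩) (fun _ hi => ⟨w, hi⟩) hvw⟩

end Copies

section Splitting

variable {𝓕 : GraphFam} {K : ℕ} {V W J ι κ τ : Type*} {G : SimpleGraph V}
  {H : SimpleGraph W} {T : SimpleGraph τ}

theorem withCopies_sup_edge (u v : V) :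
    withCopies (G ⊔ edge u v) T κ = withCopies G T κ ⊔ edge (.inl u) (.inl v) := by
  ext (x | x) (y | y) <;> simp [edge_adj]

theorem withCopies_isContained_withCopies (h : G ⊑ H) : withCopies G T κ ⊑ withCopies H T κ := by
  obtain ⟨f⟩ := h
  refine ⟨⟨⟨Sum.map f id, ?_⟩, f.injective.sumMap Function.injective_id⟩⟩
  rintro (x | x) (y | y) hxy
  · exact f.toHom.map_adj hxy
  · cases hxy
  · cases hxy
  · exact hxy

/-- The codomain of an embedding as the disjoint union of its domain and the complement of its
range. -/
noncomputable def sumRangeCompl (j : J ↪ ι) : J ⊕ ↥(Set.range j)ᶜ ≃ ι :=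
  open scoped Classical in
  ((Equiv.ofInjective j j.injective).sumCongr (Equiv.refl _)).trans (Equiv.Set.sumCompl _)

/-- The copies indexed by the range of `j` are merged into the base graph. -/
noncomputable def splitCopies (G : SimpleGraph V) (T : SimpleGraph τ) (j : J ↪ ι) :
    withCopies (withCopies G T J) T ↥(Set.range j)ᶜ ≃g withCopies G T ι where
  toEquiv := (Equiv.sumAssoc _ _ _).trans <| (Equiv.refl V).sumCongr <|
    (Equiv.sumProdDistrib _ _ _).symm.trans ((sumRangeCompl j).prodCongr (Equiv.refl τ))
  map_rel_iff' {x y} := by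
    rcases x with (x | x) | x <;> rcases y with (y | y) | y <;>
      simp [boxProd_adj]

theorem exists_splitCopies_inl_eq (j : J ↪ ι) {v : V ⊕ ι × τ}
    (hv : ∀ i ∈ copyIndex v, i ∈ Set.range j) : ∃ w, splitCopies G T j (.inl w) = v := by
  rcases v with v | ⟨i, a⟩
  · exact ⟨.inl v, rfl⟩
  · obtain ⟨i, rfl⟩ := hv i rfl
    exact ⟨.inr (i, a), rfl⟩

theorem le_card_range_compl [Finite ι] (j : J ↪ ι) (h : K + Nat.card J ≤ Nat.card ι) :
    K ≤ Nat.card ↥(Set.range j)ᶜ := by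
  have := Finite.of_injective j j.injective
  rw [← Nat.card_congr (sumRangeCompl j), Nat.card_sum] at h
  omega

theorem FamSaturated.not_famFree_of_split (h : FamSaturated 𝓕 (withCopies G T ι)) [Finite τ]
    (hT : T.IsAcyclic) (hK : SmallTreeBound 𝓕 (Nat.card τ) K) (hκ : K ≤ Nat.card κ) (j : J ↪ ι)
    {u v : V ⊕ J × τ} (hne : u ≠ v) (huv : ¬ (withCopies G T J).Adj u v) :
    ¬ FamFree 𝓕 (withCopies (withCopies G T J ⊔ edge u v) T κ) := fun hfree => by
  have hsplit := h.of_iso (splitCopies G T j).symm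
  refine hsplit.not_famFree_sup_edge (u := .inl u) (v := .inl v) (by simpa using hne)
    (by simpa using huv) ?_
  rw [← withCopies_sup_edge]
  exact hfree.withCopies_of_le_card hT hK hκ

theorem FamSaturated.withCopies_of_le_card (h : FamSaturated 𝓕 (withCopies G T ι)) [Finite τ]
    (hT : T.IsAcyclic) (hK : SmallTreeBound 𝓕 (Nat.card τ) K) (hι : K + 2 ≤ Nat.card ι)
    (hκ : K + 2 ≤ Nat.card κ) : FamSaturated 𝓕 (withCopies G T κ) := by
  classical
  have : Finite ι := Nat.finite_of_card_ne_zero (by omega)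
  have : Finite κ := Nat.finite_of_card_ne_zero (by omega)
  refine famSaturated_iff.2 ⟨h.famFree.withCopies_of_le_card hT hK (by omega),
    fun u v hne huv hfree => ?_⟩
  let J : Finset κ := (copyIndex u).toFinset ∪ (copyIndex v).toFinset
  have hJ : Nat.card J ≤ 2 := by
    have hcard (x : V ⊕ κ × τ) : (copyIndex x).toFinset.card ≤ 1 := by
      cases copyIndex x <;> simp
    rw [Nat.card_eq_fintype_card, Fintype.card_coe]
    exact (Finset.card_union_le _ _).trans (add_le_add (hcard u) (hcard v))
  let j : J ↪ κ := .subtype _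
  obtain ⟨i⟩ : Nonempty (J ↪ ι) := nonempty_embedding_of_card_le (by omega)
  obtain ⟨u', hu⟩ := exists_splitCopies_inl_eq (G := G) (T := T) j (v := u)
    fun i hi => ⟨⟨i, Finset.mem_union_left _ (Option.mem_toFinset.2 hi)⟩, rfl⟩
  obtain ⟨v', hv⟩ := exists_splitCopies_inl_eq (G := G) (T := T) j (v := v)
    fun i hi => ⟨⟨i, Finset.mem_union_right _ (Option.mem_toFinset.2 hi)⟩, rfl⟩
  refine h.not_famFree_of_split hT hK (κ := ↥(Set.range j)ᶜ) (le_card_range_compl j (by omega)) i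
    (u := u') (v := v') ?_ ?_ ?_
  · rintro rfl
    exact hne (hu.symm.trans hv)
  · exact fun h' => huv (hu ▸ hv ▸ (splitCopies G T j).map_adj_iff.2 (by simpa using h'))
  · rw [withCopies_sup_edge]
    refine hfree.of_isContained ?_
    rw [← hu, ← hv]
    exact sup_edge_isContained_sup_edge (splitCopies G T j).toCopy _ _

end Splitting

section TreeResidue

variable {𝓕 : GraphFam} {K : ℕ} {V ι τ : Type*} {G : SimpleGraph V} {T : SimpleGraph τ}

/-- Copies of `T` without edges to the other vertices split off as a disjoint union. -/
noncomputable def withCopiesInduceCompl (G : SimpleGraph V) (T : SimpleGraph τ) (φ : ι × τ ↪ V)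
    (hφ : ∀ i a w, G.Adj (φ (i, a)) w ↔ ∃ b, w = φ (i, b) ∧ T.Adj a b) :
    withCopies (G.induce (Set.range φ)ᶜ) T ι ≃g G where
  toEquiv := (Equiv.sumComm _ _).trans (sumRangeCompl φ)
  map_rel_iff' {x y} := by
    have hcopy (p : ι × τ) (v : ↥(Set.range φ)ᶜ) : ¬ G.Adj (φ p) v := fun h =>
      let ⟨b, hb, _⟩ := (hφ _ _ _).1 h
      v.2 ⟨_, hb.symm⟩
    rcases x with v | ⟨i, a⟩ <;> rcases y with w | ⟨j, b⟩
    · exact .rfl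
    · exact iff_of_false (fun h => hcopy (j, b) v h.symm) (by simp)
    · exact iff_of_false (hcopy (i, a) w) (by simp)
    · refine (hφ i a (φ (j, b))).trans (.trans ?_ boxProd_adj.symm)
      simp only [φ.injective.eq_iff, Prod.mk.injEq, bot_adj, false_and, false_or]
      exact ⟨fun ⟨_, ⟨hij, hb⟩, hab⟩ => ⟨hb ▸ hab, hij.symm⟩,
        fun ⟨hab, hij⟩ => ⟨b, ⟨hij.symm, rfl⟩, hab⟩⟩

/-- The vertices of `G` lying in a component isomorphic to `T`, with coordinates in `T`. -/
noncomputable def componentsIsoEmbedding (G : SimpleGraph V) (T : SimpleGraph τ) :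
    ComponentsIso G T × τ ↪ V where
  toFun p := (p.1.2.some.symm p.2).1
  inj' := by
    rintro ⟨c, a⟩ ⟨d, b⟩ h
    have hc : G.connectedComponentMk (c.2.some.symm a) = c := (c.2.some.symm a).2
    have hd : G.connectedComponentMk (d.2.some.symm b) = d := (d.2.some.symm b).2
    obtain rfl : c = d := Subtype.ext (hc.symm.trans ((congrArg _ h).trans hd))
    exact congrArg (Prod.mk c) (c.2.some.symm.injective (Subtype.ext h))

theorem componentsIsoEmbedding_adj (c : ComponentsIso G T) (a : τ) (w : V) :
    G.Adj (componentsIsoEmbedding G T (c, a)) w ↔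
      ∃ b, w = componentsIsoEmbedding G T (c, b) ∧ T.Adj a b := by
  let e := c.2.some
  constructor
  · intro h
    have hw : w ∈ c.1.supp := (ConnectedComponent.sound h.reachable).symm.trans (e.symm a).2
    refine ⟨e ⟨w, hw⟩, congrArg Subtype.val (e.symm_apply_apply ⟨w, hw⟩).symm, ?_⟩
    rw [← e.apply_symm_apply a]
    exact e.map_adj_iff.2 h
  · rintro ⟨b, rfl, hab⟩
    exact e.symm.map_adj_iff.2 hab

theorem exists_iso_withCopies_componentsIso [Finite V] (G : SimpleGraph V) (T : SimpleGraph τ) :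
    ∃ (m : ℕ) (G₀ : SimpleGraph (Fin m)),
      Nonempty (withCopies G₀ T (ComponentsIso G T) ≃g G) :=
  ⟨_, _, ⟨(Iso.sumCongr (Iso.map (Finite.equivFin _) _).symm .refl).trans
    (withCopiesInduceCompl G T _ componentsIsoEmbedding_adj)⟩⟩

/-- The residue `c` is realised by `T`: for some graph `G`, whose order is congruent to `c` modulo
the order of `T`, the disjoint union of `G` and any large number of copies of `T` is saturated. -/
def TreeResidue (𝓕 : GraphFam) (T : SimpleGraph τ) (c : ℕ) : Prop :=
  ∃ (m : ℕ) (G : SimpleGraph (Fin m)), m ≡ c [MOD Nat.card τ] ∧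
    ∀ᶠ N in atTop, FamSaturated 𝓕 (withCopies G T (Fin N))

theorem FamSaturated.treeResidue_of_withCopies [Finite V] [Finite τ]
    (h : FamSaturated 𝓕 (withCopies G T ι)) (hT : T.IsAcyclic)
    (hK : SmallTreeBound 𝓕 (Nat.card τ) K) (hι : K + 2 ≤ Nat.card ι) :
    TreeResidue 𝓕 T (Nat.card V) :=
  ⟨_, _, .refl _, (eventually_ge_atTop (K + 2)).mono fun N hN =>
    (h.of_iso (Iso.sumCongr (Iso.map (Finite.equivFin V) G) .refl)).withCopies_of_le_card hT hK hι
      (by simpa)⟩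

theorem TreeResidue.of_modEq {c d : ℕ} (h : TreeResidue 𝓕 T c) (hcd : c ≡ d [MOD Nat.card τ]) :
    TreeResidue 𝓕 T d :=
  let ⟨m, G, hm, hG⟩ := h
  ⟨m, G, hm.trans hcd, hG⟩

theorem FamSaturated.treeResidue_of_embedding [Finite V] [Finite τ] (h : FamSaturated 𝓕 G)
    (hT : T.IsAcyclic) (hK : SmallTreeBound 𝓕 (Nat.card τ) K) (φ : ι × τ ↪ V)
    (hφ : ∀ i a w, G.Adj (φ (i, a)) w ↔ ∃ b, w = φ (i, b) ∧ T.Adj a b)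
    (hι : K + 2 ≤ Nat.card ι) : TreeResidue 𝓕 T (Nat.card V) := by
  let e := withCopiesInduceCompl G T φ hφ
  have : Finite (ι × τ) := .of_injective φ φ.injective
  refine ((h.of_iso e.symm).treeResidue_of_withCopies hT hK hι).of_modEq ?_
  rw [← Nat.card_congr e.toEquiv, Nat.card_sum, Nat.card_prod]
  simp [Nat.ModEq]

/-- The residue classes modulo `r` of the residues realised by a tree of order `r`. -/
def treeResidueClasses (𝓕 : GraphFam) (r : ℕ) : Set (Set ℕ) :=
  {C | ∃ c < r, C = {n | n % r = c} ∧ ∃ T : SimpleGraph (Fin r), T.IsTree ∧ TreeResidue 𝓕 T c}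

/-- `n` lies in none of the classes of `treeResidueClasses 𝓕 q` with `1 ≤ q < r`. -/
def AvoidsTreeResidues (𝓕 : GraphFam) (r n : ℕ) : Prop :=
  ∀ q, 1 ≤ q → q < r → ∀ C ∈ treeResidueClasses 𝓕 q, n ∉ C

theorem AvoidsTreeResidues.card_componentsIso_le {r n t : ℕ} (h : AvoidsTreeResidues 𝓕 r n)
    {G : SimpleGraph (Fin n)} (hG : FamSaturated 𝓕 G) (ht : t < r) {T : SimpleGraph (Fin t)}
    (hT : T.IsTree) (hK : SmallTreeBound 𝓕 t K) : Nat.card (ComponentsIso G T) ≤ K + 1 := by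
  by_contra! hcard
  have hpos : 0 < t := by simpa [Fin.pos_iff_nonempty] using hT.connected.nonempty
  have hres := hG.treeResidue_of_embedding hT.isAcyclic (by rwa [Nat.card_fin]) _
    componentsIsoEmbedding_adj hcard
  refine h t hpos ht _ ⟨n % t, Nat.mod_lt _ hpos, rfl, T, hT, hres.of_modEq ?_⟩ rfl
  simp [Nat.ModEq]

end TreeResidue

section EdgeCount

variable {V W ι τ : Type*} {T : SimpleGraph τ}

theorem sum_card_supp [Finite V] (G : SimpleGraph V) [Fintype G.ConnectedComponent] :
    ∑ c : G.ConnectedComponent, Nat.card c.supp = Nat.card V := by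
  rw [← Nat.card_sigma]
  exact Nat.card_congr (Equiv.sigmaFiberEquiv G.connectedComponentMk)

theorem sum_card_edgeSet_induce_supp_le [Finite V] (G : SimpleGraph V)
    [Fintype G.ConnectedComponent] :
    ∑ c : G.ConnectedComponent, Nat.card (G.induce c.supp).edgeSet ≤ Nat.card G.edgeSet := by
  rw [← Nat.card_sigma]
  refine Nat.card_le_card_of_injective
    (fun p : Σ c : G.ConnectedComponent, (G.induce c.supp).edgeSet =>
      (Embedding.induce p.1.supp).mapEdgeSet p.2) ?_
  rintro ⟨c, e, he⟩ ⟨d, e', he'⟩ h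
  have hval : e.map Subtype.val = e'.map Subtype.val := congrArg Subtype.val h
  obtain rfl : c = d := by
    induction e with | _ x y
    have hx : (x : V) ∈ e'.map Subtype.val := hval ▸ Sym2.mem_mk_left _ _
    obtain ⟨z, -, hz⟩ := Sym2.mem_map.1 hx
    exact x.2.symm.trans ((congrArg _ hz.symm).trans z.2)
  obtain rfl := Sym2.map.injective Subtype.val_injective hval
  rfl

theorem card_le_card_edgeSet_add_card_isTree [Finite V] (G : SimpleGraph V) :
    Nat.card V ≤ Nat.card G.edgeSet +
      Nat.card {c : G.ConnectedComponent // (G.induce c.supp).IsTree} := by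
  classical
  have := Fintype.ofFinite G.ConnectedComponent
  have hcomp (c : G.ConnectedComponent) : Nat.card c.supp ≤
      Nat.card (G.induce c.supp).edgeSet + if (G.induce c.supp).IsTree then 1 else 0 := by
    have hconn : (G.induce c.supp).Connected := c.connected_toSimpleGraph
    have hle := hconn.card_vert_le_card_edgeSet_add_one
    split_ifs with htree
    · exact hle
    · have hne : Nat.card (G.induce c.supp).edgeSet + 1 ≠ Nat.card c.supp :=
        fun h => htree (isTree_iff_connected_and_card.2 ⟨hconn, h⟩)
      omega
  calc Nat.card V = ∑ c : G.ConnectedComponent, Nat.card c.supp := (sum_card_supp G).symm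
    _ ≤ _ := Finset.sum_le_sum fun c _ => hcomp c
    _ ≤ _ := by
      rw [Finset.sum_add_distrib, Nat.card_eq_fintype_card (α := {c : G.ConnectedComponent // _}),
        Fintype.card_subtype, Finset.card_filter]
      exact Nat.add_le_add_right (sum_card_edgeSet_induce_supp_le G) _

theorem mul_card_isTree_le [Finite V] (G : SimpleGraph V) (R : ℕ) :
    (R + 1) * Nat.card {c : G.ConnectedComponent // (G.induce c.supp).IsTree} ≤
      (R + 1) * (smallTreeComponents G R).ncard + Nat.card V := by
  classical
  have := Fintype.ofFinite G.ConnectedComponent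
  have hcomp (c : G.ConnectedComponent) : ((R + 1) * if (G.induce c.supp).IsTree then 1 else 0) ≤
      ((R + 1) * if c ∈ smallTreeComponents G R then 1 else 0) + Nat.card c.supp := by
    have hmem : c ∈ smallTreeComponents G R ↔
      (G.induce c.supp).IsTree ∧ Nat.card c.supp ≤ R := .rfl
    by_cases htree : (G.induce c.supp).IsTree <;> by_cases hcard : Nat.card c.supp ≤ R <;>
      simp only [hmem, htree, hcard, and_self, and_false, false_and, if_true, if_false] <;> omega
  calc _ = ∑ c : G.ConnectedComponent, (R + 1) * if (G.induce c.supp).IsTree then 1 else 0 := by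
        rw [← Finset.mul_sum, ← Finset.card_filter, Nat.card_eq_fintype_card,
          Fintype.card_subtype]
    _ ≤ _ := Finset.sum_le_sum fun c _ => hcomp c
    _ = _ := by
      rw [Finset.sum_add_distrib, sum_card_supp, ← Finset.mul_sum, ← Finset.card_filter,
        Set.ncard_eq_toFinset_card',
        Set.filter_mem_univ_eq_toFinset]

/-- The excess of the number of edges of `G` over `(1 - 1 / r)` times its order, scaled by `r` to be
an integer. Trees of order `r` contribute nothing to it. -/
noncomputable def edgeExcess (r : ℕ) (G : SimpleGraph V) : ℤ :=
  r * Nat.card G.edgeSet - (r - 1) * Nat.card V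

theorem neg_mul_ncard_smallTreeComponents_le_edgeExcess [Finite V] (G : SimpleGraph V) (R : ℕ) :
    -((R + 1) * (smallTreeComponents G R).ncard : ℤ) ≤ edgeExcess (R + 1) G := by
  have h₁ := Nat.mul_le_mul_left (R + 1) (card_le_card_edgeSet_add_card_isTree G)
  have h₂ := mul_card_isTree_le G R
  unfold edgeExcess
  zify at h₁ h₂
  push_cast
  linarith

theorem exists_le_edgeExcess (R : ℕ) (B : ∀ t, SimpleGraph (Fin t) → ℕ) :
    ∃ A, ∀ (n : ℕ) (G : SimpleGraph (Fin n)),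
      (∀ t ≤ R, ∀ T : SimpleGraph (Fin t), T.IsTree → Nat.card (ComponentsIso G T) ≤ B t T) →
        A ≤ edgeExcess (R + 1) G := by
  obtain ⟨C, hC⟩ : ∃ C, C = ∑ t : Fin (R + 1), ∑ T : SimpleGraph (Fin t), B t T := ⟨_, rfl⟩
  refine ⟨-((R + 1) * C), fun n G hB => ?_⟩
  have hle : (smallTreeComponents G R).ncard ≤ C := hC ▸ ncard_smallTreeComponents_le G R B hB
  calc (-((R + 1) * C) : ℤ) ≤ -((R + 1) * (smallTreeComponents G R).ncard) := by gcongr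
    _ ≤ edgeExcess (R + 1) G := neg_mul_ncard_smallTreeComponents_le_edgeExcess G R

theorem add_one_mul_edgeExcess (r : ℕ) (G : SimpleGraph V) :
    (r + 1) * edgeExcess r G = r * edgeExcess (r + 1) G + Nat.card V := by
  unfold edgeExcess
  push_cast
  ring

theorem card_edgeSet_bot_boxProd (T : SimpleGraph τ) :
    Nat.card ((⊥ : SimpleGraph ι) □ T).edgeSet = Nat.card ι * Nat.card T.edgeSet := by
  rw [← Nat.card_prod]
  refine (Nat.card_congr (Equiv.ofBijective (fun p : ι × T.edgeSet =>
    (⟨Sym2.map (Prod.mk p.1) p.2.1, ?_⟩ : ((⊥ : SimpleGraph ι) □ T).edgeSet)) ⟨?_, ?_⟩)).symm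
  · obtain ⟨i, e, he⟩ := p
    induction e with | _ x y
    simpa using he
  · rintro ⟨i, e, he⟩ ⟨j, e', he'⟩ h
    have hval : e.map (Prod.mk i) = e'.map (Prod.mk j) := congrArg Subtype.val h
    obtain rfl : i = j := by
      induction e with | _ x y
      have hx : (i, x) ∈ e'.map (Prod.mk j) := hval ▸ Sym2.mem_mk_left _ _
      obtain ⟨z, -, hz⟩ := Sym2.mem_map.1 hx
      exact (congrArg Prod.fst hz).symm
    obtain rfl := Sym2.map.injective (Prod.mk_right_injective i) hval
    rfl
  · rintro ⟨e, he⟩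
    induction e with | _ x y
    obtain ⟨i, a⟩ := x
    obtain ⟨j, b⟩ := y
    simp only [mem_edgeSet, boxProd_adj, bot_adj, false_and, false_or] at he
    obtain ⟨hab, rfl⟩ := he
    exact ⟨(i, ⟨s(a, b), hab⟩), rfl⟩

theorem edgeExcess_withCopies [Finite V] [Finite ι] [Finite τ] (G : SimpleGraph V)
    (hT : T.IsTree) :
    edgeExcess (Nat.card τ) (withCopies G T ι) = edgeExcess (Nat.card τ) G := by
  have hcard : (Nat.card T.edgeSet : ℤ) = Nat.card τ - 1 := by
    rw [← (isTree_iff_connected_and_card.1 hT).2]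
    push_cast
    ring
  unfold edgeExcess
  rw [Nat.card_congr edgeSetSumEquiv, Nat.card_sum, Nat.card_sum, Nat.card_prod,
    card_edgeSet_bot_boxProd]
  push_cast
  rw [hcard]
  ring

theorem edgeExcess_congr {G : SimpleGraph V} {H : SimpleGraph W} (e : G ≃g H) (r : ℕ) :
    edgeExcess r G = edgeExcess r H := by
  rw [edgeExcess, edgeExcess, Nat.card_congr e.mapEdgeSet, Nat.card_congr e.toEquiv]

end EdgeCount

section Asymptotics

variable {𝓕 : GraphFam} {V ι τ : Type*} {G : SimpleGraph V} {T : SimpleGraph τ} {r : ℕ}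

/-- The smallest `edgeExcess r` of a saturated graph of order `n`. -/
noncomputable def satExcess (𝓕 : GraphFam) (r n : ℕ) : ℤ := r * sat n 𝓕 - (r - 1) * n

theorem satExcess_le_edgeExcess [Finite V] (h : FamSaturated 𝓕 G) (r : ℕ) :
    satExcess 𝓕 r (Nat.card V) ≤ edgeExcess r G := by
  unfold satExcess edgeExcess
  gcongr
  exact sat_le_of_famSaturated h

theorem exists_famSaturated_edgeExcess_eq_satExcess
    (hne : ∀ F ∈ 𝓕, 1 ≤ Nat.card F.2.edgeSet) (n : ℕ) :
    ∃ G : SimpleGraph (Fin n), FamSaturated 𝓕 G ∧ ∀ r, edgeExcess r G = satExcess 𝓕 r n := by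
  obtain ⟨G, hG, hcard⟩ := exists_famSaturated_card_edgeSet_eq_sat hne n
  exact ⟨G, hG, fun r => by rw [edgeExcess, satExcess, hcard, Nat.card_fin]⟩

theorem satExcess_le_of_withCopies [Finite V] [Finite ι] [Finite τ] (hT : T.IsTree)
    (h : FamSaturated 𝓕 (withCopies G T ι)) :
    satExcess 𝓕 (Nat.card τ) (Nat.card V + Nat.card ι * Nat.card τ) ≤
      edgeExcess (Nat.card τ) G := by
  simpa only [Nat.card_sum, Nat.card_prod, edgeExcess_withCopies G hT] using
    satExcess_le_edgeExcess h (Nat.card τ)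

theorem exists_eq_add_mul_of_modEq {m n : ℕ} (h : n ≡ m [MOD r]) (hle : m ≤ n) :
    ∃ N, n = m + N * r := by
  obtain ⟨N, hN⟩ := (Nat.modEq_iff_dvd' hle).1 h.symm
  exact ⟨N, by rw [mul_comm, ← hN, Nat.add_sub_cancel' hle]⟩

theorem TreeResidue.exists_eventually_satExcess_le [Finite τ] (hT : T.IsTree) {c : ℕ}
    (h : TreeResidue 𝓕 T c) :
    ∃ B, ∀ᶠ n in atTop, n ≡ c [MOD Nat.card τ] → satExcess 𝓕 (Nat.card τ) n ≤ B := by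
  obtain ⟨m, G, hm, hG⟩ := h
  obtain ⟨N₀, hN₀⟩ := eventually_atTop.1 hG
  refine ⟨edgeExcess (Nat.card τ) G,
    (eventually_ge_atTop (m + N₀ * Nat.card τ)).mono fun n hn hnc => ?_⟩
  obtain ⟨N, rfl⟩ := exists_eq_add_mul_of_modEq (hnc.trans hm.symm) (by omega)
  have := hT.connected.nonempty
  have hN : N₀ ≤ N := Nat.le_of_mul_le_mul_right (by omega) (Nat.card_pos (α := τ))
  have hle := satExcess_le_of_withCopies hT (hN₀ N hN)
  rwa [Nat.card_fin, Nat.card_fin] at hle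

theorem FamSaturated.satExcess_le [Finite V] [Finite τ] (h : FamSaturated 𝓕 G) (hT : T.IsTree)
    {K : ℕ} (hK : SmallTreeBound 𝓕 (Nat.card τ) K)
    (hcard : K + 2 ≤ Nat.card (ComponentsIso G T)) {n : ℕ} (hn : n ≡ Nat.card V [MOD Nat.card τ])
    (hle : Nat.card V ≤ n) :
    satExcess 𝓕 (Nat.card τ) n ≤ edgeExcess (Nat.card τ) G := by
  obtain ⟨m, G₀, ⟨e⟩⟩ := exists_iso_withCopies_componentsIso G T
  obtain ⟨N, rfl⟩ := exists_eq_add_mul_of_modEq hn hle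
  have : Finite (ComponentsIso G T) := Nat.finite_of_card_ne_zero (by omega)
  have hsat : FamSaturated 𝓕 (withCopies G₀ T (ComponentsIso G T ⊕ Fin N)) :=
    (h.of_iso e.symm).withCopies_of_le_card hT.isAcyclic hK hcard (by rw [Nat.card_sum]; omega)
  calc satExcess 𝓕 (Nat.card τ) (Nat.card V + N * Nat.card τ)
      = satExcess 𝓕 (Nat.card τ)
          (Nat.card (Fin m) + Nat.card (ComponentsIso G T ⊕ Fin N) * Nat.card τ) := by
        rw [← Nat.card_congr e.toEquiv, Nat.card_sum, Nat.card_sum, Nat.card_prod, Nat.card_fin N,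
          add_mul, add_assoc]
    _ ≤ edgeExcess (Nat.card τ) G₀ := satExcess_le_of_withCopies hT hsat
    _ = edgeExcess (Nat.card τ) G :=
      (edgeExcess_withCopies G₀ hT).symm.trans (edgeExcess_congr e _)

theorem exists_le_satExcess (hne : ∀ F ∈ 𝓕, 1 ≤ Nat.card F.2.edgeSet) (hqf : QuasiFinite 𝓕)
    (r : ℕ) : ∃ A, ∀ n, AvoidsTreeResidues 𝓕 (r + 1) n → A ≤ satExcess 𝓕 (r + 1) n := by
  choose K hK using hqf.exists_smallTreeBound
  obtain ⟨A, hA⟩ := exists_le_edgeExcess r fun t _ => K t + 1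
  refine ⟨A, fun n hn => ?_⟩
  obtain ⟨G, hG, hexc⟩ := exists_famSaturated_edgeExcess_eq_satExcess hne n
  rw [← hexc]
  exact hA n G fun t ht _ hT => hn.card_componentsIso_le hG (Nat.lt_succ_of_le ht) hT (hK t)

theorem eventually_exists_card_componentsIso_ge (hne : ∀ F ∈ 𝓕, 1 ≤ Nat.card F.2.edgeSet)
    {K : ℕ → ℕ} (hK : ∀ t, SmallTreeBound 𝓕 t (K t)) (r : ℕ) (B : ℤ) :
    ∀ᶠ n in atTop, AvoidsTreeResidues 𝓕 r n → satExcess 𝓕 r n ≤ B →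
      ∃ (G : SimpleGraph (Fin n)) (T : SimpleGraph (Fin r)), FamSaturated 𝓕 G ∧
        edgeExcess r G = satExcess 𝓕 r n ∧ T.IsTree ∧ K r + 2 ≤ Nat.card (ComponentsIso G T) := by
  obtain ⟨A, hA⟩ := exists_le_edgeExcess r fun t _ => K t + 1
  filter_upwards [eventually_gt_atTop ((r + 1) * B - r * A).toNat] with n hlarge hn hB
  obtain ⟨G, hG, hexc⟩ := exists_famSaturated_edgeExcess_eq_satExcess hne n
  by_contra! hcon
  have hlower : A ≤ edgeExcess (r + 1) G := hA n G fun t ht T hT => by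
    rcases ht.lt_or_eq with ht | rfl
    · exact hn.card_componentsIso_le hG ht hT (hK t)
    · exact Nat.le_of_lt_succ (hcon G T hG (hexc _) hT)
  have hrec : (r + 1) * satExcess 𝓕 r n = r * edgeExcess (r + 1) G + n := by
    rw [← hexc, add_one_mul_edgeExcess, Nat.card_fin]
  refine lt_irrefl ((r + 1) * B) ?_
  calc (r + 1) * B < r * A + n := by omega
    _ ≤ r * edgeExcess (r + 1) G + n := by gcongr
    _ = (r + 1) * satExcess 𝓕 r n := hrec.symm
    _ ≤ (r + 1) * B := by gcongr

theorem exists_eventually_eq_of_antitoneOn {f : ℕ → ℤ} {s : Set ℕ} (hf : AntitoneOn f s)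
    (hs : BddBelow (f '' s)) : ∃ k, ∀ᶠ n in atTop, n ∈ s → f n = k := by
  rcases s.eq_empty_or_nonempty with rfl | hne
  · simp
  · obtain ⟨m, hm, hmin⟩ := Int.csInf_mem (hne.image f) hs
    exact ⟨f m, (eventually_ge_atTop m).mono fun n hn hns =>
      (hf hm hns hn).antisymm (hmin ▸ csInf_le hs ⟨n, hns, rfl⟩)⟩

theorem exists_eventually_satExcess_eq (hne : ∀ F ∈ 𝓕, 1 ≤ Nat.card F.2.edgeSet)
    (hqf : QuasiFinite 𝓕) (hr : 1 ≤ r) {C : Set ℕ} (hC : C ∈ treeResidueClasses 𝓕 r) :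
    ∃ k, ∀ᶠ n in atTop, n ∈ C → AvoidsTreeResidues 𝓕 r n → satExcess 𝓕 r n = k := by
  obtain ⟨c, hc, rfl, T, hT, hTc⟩ := hC
  choose K hK using hqf.exists_smallTreeBound
  obtain ⟨B, hB⟩ := hTc.exists_eventually_satExcess_le hT
  rw [Nat.card_fin] at hB
  have hcomp := eventually_exists_card_componentsIso_ge hne hK r B
  obtain ⟨n₀, hn₀⟩ := eventually_atTop.1 (hB.and hcomp)
  let s := {n | n % r = c ∧ AvoidsTreeResidues 𝓕 r n ∧ n₀ ≤ n}
  have hanti : AntitoneOn (satExcess 𝓕 r) s := fun m hm n hn hmn => by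
    obtain ⟨hBm, hGm⟩ := hn₀ m hm.2.2
    obtain ⟨G, T, hG, hexc, hT, hcard⟩ :=
      hGm hm.2.1 (hBm (hm.1.trans (Nat.mod_eq_of_lt hc).symm))
    have hle := hG.satExcess_le (n := n) hT (by simpa only [Nat.card_fin] using hK r) hcard
    simp only [Nat.card_fin] at hle
    exact (hle (hn.1.trans hm.1.symm) hmn).trans_eq hexc
  have hbdd : BddBelow (satExcess 𝓕 r '' s) := by
    obtain ⟨r, rfl⟩ := Nat.exists_eq_add_of_le' hr
    obtain ⟨B, hB⟩ := exists_le_satExcess hne hqf r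
    exact ⟨B, by rintro _ ⟨n, hn, rfl⟩; exact hB n hn.2.1⟩
  obtain ⟨k, hk⟩ := exists_eventually_eq_of_antitoneOn hanti hbdd
  refine ⟨k, ?_⟩
  filter_upwards [hk, eventually_ge_atTop n₀] with n hn hle hnc hav
  exact hn ⟨hnc, hav, hle⟩

theorem tendsto_div_of_forall_exists_le {g : ℕ → ℝ} (hg : ∀ n, 0 ≤ g n)
    (h : ∀ R : ℕ, ∃ B, ∀ n, g n ≤ B + n / (R + 1)) :
    Tendsto (fun n => g n / n) atTop (𝓝 0) := by
  refine tendsto_order.2 ⟨fun ε hε => .of_forall fun n =>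
    hε.trans_le (div_nonneg (hg n) n.cast_nonneg), fun ε hε => ?_⟩
  obtain ⟨R, hR⟩ := exists_nat_one_div_lt (half_pos hε)
  obtain ⟨B, hB⟩ := h R
  have hlim : Tendsto (fun n : ℕ => B / n) atTop (𝓝 0) :=
    tendsto_const_div_atTop_nhds_zero_nat B
  filter_upwards [hlim.eventually_lt_const (half_pos hε), eventually_gt_atTop 0] with n hn hpos
  calc g n / n ≤ (B + n / (R + 1)) / n := by gcongr; exact hB n
    _ = B / n + 1 / (R + 1) := by field_simp
    _ < ε := by linarith

theorem exists_sublinear_deficit (hne : ∀ F ∈ 𝓕, 1 ≤ Nat.card F.2.edgeSet)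
    (hqf : QuasiFinite 𝓕) : ∃ g : ℕ → ℝ, Tendsto (fun n => g n / n) atTop (𝓝 0) ∧
      ∀ n, (∀ r, AvoidsTreeResidues 𝓕 r n) → n - g n ≤ sat n 𝓕 := by
  classical
  refine ⟨fun n => if ∀ r, AvoidsTreeResidues 𝓕 r n then max (n - sat n 𝓕) 0 else 0,
    tendsto_div_of_forall_exists_le (fun n => by positivity) fun R => ?_, fun n hn => ?_⟩
  · obtain ⟨A, hA⟩ := exists_le_satExcess hne hqf R
    refine ⟨|(A : ℝ)|, fun n => ?_⟩
    split_ifs with hn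
    · have hle : (A : ℝ) ≤ (R + 1) * sat n 𝓕 - R * n := by
        simpa [satExcess] using Int.cast_le (R := ℝ).2 (hA n (hn _))
      refine max_le ?_ (by positivity)
      calc (n - sat n 𝓕 : ℝ) ≤ (|(A : ℝ)| + n) / (R + 1) := by
            rw [le_div_iff₀ (by positivity)]
            linarith [neg_abs_le (A : ℝ)]
        _ ≤ |(A : ℝ)| + n / (R + 1) := by
            rw [add_div]
            gcongr
            exact div_le_self (abs_nonneg _) (by linarith [R.cast_nonneg (α := ℝ)])
    · positivity
  · simp only [hn, implies_true, if_true]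
    linarith [le_max_left (n - sat n 𝓕 : ℝ) 0]

end Asymptotics

section Absorption

variable {𝓕 : GraphFam} {K : ℕ} {V σ τ ι κ : Type*} {G : SimpleGraph V} {T : SimpleGraph τ}
  {U : SimpleGraph σ}

/-- The graph obtained from `U` by attaching copies of `T` indexed by `ι`, each by an edge between
`u` and the vertex `x` of the copy. -/
def attachCopies (U : SimpleGraph σ) (T : SimpleGraph τ) (u : σ) (x : τ) (ι : Type*) :
    SimpleGraph (σ ⊕ ι × τ) where
  Adj
    | .inl a, .inl b => U.Adj a b
    | .inl a, .inr (_, b) => a = u ∧ b = x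
    | .inr (_, b), .inl a => a = u ∧ b = x
    | .inr (i, a), .inr (j, b) => i = j ∧ T.Adj a b
  symm := ⟨by rintro (a | ⟨i, a⟩) (b | ⟨j, b⟩) <;> simp [adj_comm, eq_comm]⟩
  loopless := ⟨by rintro (a | ⟨i, a⟩) <;> simp⟩

instance [DecidableEq σ] [DecidableEq τ] [DecidableEq ι] [DecidableRel U.Adj] [DecidableRel T.Adj]
    (u : σ) (x : τ) : DecidableRel (attachCopies U T u x ι).Adj
  | .inl a, .inl b => inferInstanceAs (Decidable (U.Adj a b))
  | .inl a, .inr (_, b) => inferInstanceAs (Decidable (a = u ∧ b = x))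
  | .inr (_, b), .inl a => inferInstanceAs (Decidable (a = u ∧ b = x))
  | .inr (i, a), .inr (j, b) => inferInstanceAs (Decidable (i = j ∧ T.Adj a b))

/-- Reindexing attached copies along an embedding. -/
def reindexAttached (e : ι ↪ κ) (u : σ) (x : τ) :
    Copy (attachCopies U T u x ι) (attachCopies U T u x κ) where
  toHom :=
    { toFun := Sum.map id (Prod.map e id)
      map_rel' := by
        rintro (a | ⟨i, a⟩) (b | ⟨j, b⟩) h
        · exact h
        · exact h
        · exact h
        · exact ⟨congrArg e h.1, h.2⟩ }
  injective' := Function.injective_id.sumMap (e.injective.prodMap Function.injective_id)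

/-- Attaching copies of `T` to any vertex `u` of `U` yields a copy of `T` through `u` that uses at
most `Nat.card τ` of the attached copies. -/
def AbsorbsCopies (T : SimpleGraph τ) (U : SimpleGraph σ) : Prop :=
  ∀ u x, ∃ (f : Copy T (attachCopies U T u x τ)) (y : τ), f y = .inl u

-- The first copy of `T` is placed at `U` and the first attached copies, so that the added edge
-- becomes the edge to the last attached copy.
theorem AbsorbsCopies.exists_isContained (hU : AbsorbsCopies T U) (G : SimpleGraph V) (u : σ)
    (x : τ) : ∃ y, withCopies G T Bool ⊔ edge (.inr (false, y)) (.inr (true, x)) ⊑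
      G ⊕g attachCopies U T u x (Option τ) := by
  obtain ⟨f, y, hy⟩ := hU u x
  let g := (reindexAttached (U := U) (T := T) .some u x).comp f
  have hg (a b : τ) : g a ≠ .inr (none, b) := fun h => by
    change Sum.map id (Prod.map some id) (f a) = _ at h
    cases hfa : f a <;> simp [hfa, Prod.map] at h
  have hgy : g y = .inl u := congrArg (Sum.map id (Prod.map some id)) hy
  let F : V ⊕ Bool × τ → V ⊕ (σ ⊕ Option τ × τ)
    | .inl v => .inl v
    | .inr (false, a) => .inr (g a)
    | .inr (true, a) => .inr (.inr (none, a))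
  have hinj : F.Injective := by
    rintro (v | ⟨_ | _, a⟩) (w | ⟨_ | _, b⟩) h
    case inr.false.inr.false =>
      exact congrArg _ (congrArg _ (g.injective (Sum.inr_injective h)))
    all_goals simp_all [F, eq_comm]
  have hle : withCopies G T Bool ≤ (G ⊕g attachCopies U T u x (Option τ)).comap F := by
    rintro (v | ⟨_ | _, a⟩) (w | ⟨_ | _, b⟩) h
    all_goals simp only [sum_adj, boxProd_adj, bot_adj, false_and, false_or, reduceCtorEq,
      and_false, and_true] at h
    · exact h
    · exact g.toHom.map_adj h
    · exact ⟨rfl, h⟩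
  have hedge : edge (.inr (false, y)) (.inr (true, x)) ≤
      (G ⊕g attachCopies U T u x (Option τ)).comap F := by
    refine (edge_le_iff _).2 (.inr ?_)
    change (attachCopies U T u x (Option τ)).Adj (g y) (.inr (none, x))
    rw [hgy]
    exact ⟨rfl, rfl⟩
  exact ⟨y, ⟨⟨⟨F, fun h => sup_le hle hedge h⟩, hinj⟩⟩⟩

theorem isContained_of_attached {G' : SimpleGraph ((V ⊕ ι × τ) ⊕ σ)}
    (hle : withCopies G T ι ⊕g U ≤ G') {u : σ} {x : τ} (j : κ ↪ ι)
    (hj : ∀ k, G'.Adj (.inr u) (.inl (.inr (j k, x)))) :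
    withCopies (G ⊕g attachCopies U T u x κ) T ↥(Set.range j)ᶜ ⊑ G' := by
  let F : (V ⊕ (σ ⊕ κ × τ)) ⊕ ↥(Set.range j)ᶜ × τ → (V ⊕ ι × τ) ⊕ σ
    | .inl (.inl v) => .inl (.inl v)
    | .inl (.inr (.inl a)) => .inr a
    | .inl (.inr (.inr (k, a))) => .inl (.inr (j k, a))
    | .inr (i, a) => .inl (.inr (i, a))
  refine ⟨⟨⟨F, fun {v w} h => ?_⟩, ?_⟩⟩
  · rcases v with (v | a | ⟨k, a⟩) | ⟨i, a⟩ <;> rcases w with (w | b | ⟨l, b⟩) | ⟨i', b⟩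
    all_goals simp only [sum_adj, boxProd_adj, bot_adj, false_and, false_or] at h
    · exact hle h
    · exact hle h
    · obtain ⟨rfl, rfl⟩ := h
      exact hj l
    · obtain ⟨rfl, rfl⟩ := h
      exact (hj k).symm
    · obtain ⟨rfl, h⟩ := h
      exact hle (by simpa [F, boxProd_adj] using h)
    · exact hle (by simpa [F, boxProd_adj, Subtype.ext_iff] using h)
  · rintro ((v | a | ⟨k, a⟩) | ⟨⟨i, hi⟩, a⟩) ((w | b | ⟨l, b⟩) | ⟨⟨i', hi'⟩, b⟩) h
    case refine_2.inl.inr.inr.inr => exact (hi' ⟨k, congrArg Prod.fst (Sum.inr_injective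
      (Sum.inl_injective h))⟩).elim
    case refine_2.inr.inl.inr.inr => exact (hi ⟨l, (congrArg Prod.fst (Sum.inr_injective
      (Sum.inl_injective h))).symm⟩).elim
    all_goals simp_all [F]

theorem FamSaturated.card_attached_le [Finite τ] [Finite ι]
    (h : FamSaturated 𝓕 (withCopies G T ι)) (hT : T.IsAcyclic)
    (hK : SmallTreeBound 𝓕 (Nat.card τ) K) (hι : K + (Nat.card τ + 2) ≤ Nat.card ι)
    (hU : AbsorbsCopies T U) {G' : SimpleGraph ((V ⊕ ι × τ) ⊕ σ)}
    (hle : withCopies G T ι ⊕g U ≤ G') (hG' : FamFree 𝓕 G') (u : σ) (x : τ) :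
    {i | G'.Adj (.inr u) (.inl (.inr (i, x)))}.ncard ≤ Nat.card τ := by
  by_contra! hlt
  obtain ⟨j⟩ : Nonempty (Option τ ↪ {i | G'.Adj (.inr u) (.inl (.inr (i, x)))}) :=
    nonempty_embedding_of_card_le (by rwa [Finite.card_option, Nat.card_coe_set_eq])
  have hfree := hG'.of_isContained
    (isContained_of_attached hle (j.trans (.subtype _)) fun k => (j k).2)
  obtain ⟨y, hy⟩ := hU.exists_isContained G u x
  obtain ⟨b⟩ : Nonempty (Bool ↪ ι) := nonempty_embedding_of_card_le (by simp; omega)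
  refine h.not_famFree_of_split hT hK (le_card_range_compl _ ?_) b (by simp)
    (by simp) (hfree.of_isContained (withCopies_isContained_withCopies hy))
  rw [Finite.card_option]
  omega

theorem withCopies_sum_isContained (hU : U ⊑ T) :
    withCopies G T ι ⊕g U ⊑ withCopies G T (Option ι) := by
  obtain ⟨f⟩ := hU
  let F : (V ⊕ ι × τ) ⊕ σ → V ⊕ Option ι × τ :=
    Sum.elim (Sum.map id (Prod.map some id)) fun a => .inr (none, f a)
  refine ⟨⟨⟨F, fun {v w} h => ?_⟩, ?_⟩⟩
  · rcases v with (v | ⟨i, a⟩) | a <;> rcases w with (w | ⟨j, b⟩) | b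
    case refine_1.inr.inr => exact Or.inr ⟨f.toHom.map_adj h, rfl⟩
    all_goals simp_all [F, boxProd_adj]
  · rintro ((v | ⟨i, a⟩) | a) ((w | ⟨j, b⟩) | b) h
    case refine_2.inr.inr =>
      exact congrArg _ (f.injective (congrArg Prod.snd (Sum.inr_injective h)))
    all_goals simp_all [F]

/-- The indices of the copies of `T` without edges to `U` in an extension `G'` of the disjoint union
of `withCopies G T ι` and `U`. -/
def unattached (G' : SimpleGraph ((V ⊕ ι × τ) ⊕ σ)) : Set ι :=
  {i | ∀ u x, ¬ G'.Adj (.inr u) (.inl (.inr (i, x)))}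

theorem card_le_card_unattached_add [Finite σ] [Finite τ] [Finite ι] {B : ℕ}
    {G' : SimpleGraph ((V ⊕ ι × τ) ⊕ σ)}
    (hB : ∀ u x, {i | G'.Adj (.inr u) (.inl (.inr (i, x)))}.ncard ≤ B) :
    Nat.card ι ≤ Nat.card (unattached G') + Nat.card σ * Nat.card τ * B := by
  have := Fintype.ofFinite (σ × τ)
  have hcompl : (unattached G')ᶜ =
      ⋃ p : σ × τ, {i | G'.Adj (.inr p.1) (.inl (.inr (i, p.2)))} := by
    ext i
    simp [unattached]
  calc Nat.card ι = (unattached G').ncard + (unattached G')ᶜ.ncard :=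
        (Set.ncard_add_ncard_compl _).symm
    _ ≤ (unattached G').ncard + ∑ _p : σ × τ, B := by
        rw [hcompl]
        gcongr
        exact (Set.ncard_iUnion_le_of_fintype _).trans (Finset.sum_le_sum fun p _ => hB p.1 p.2)
    _ = Nat.card (unattached G') + Nat.card σ * Nat.card τ * B := by
        rw [Finset.sum_const, Finset.card_univ, ← Nat.card_eq_fintype_card, Nat.card_prod,
          smul_eq_mul, Nat.card_coe_set_eq]

/-- The vertices of the unattached copies of `T`. -/
def unattachedEmbedding (G' : SimpleGraph ((V ⊕ ι × τ) ⊕ σ)) :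
    unattached G' × τ ↪ (V ⊕ ι × τ) ⊕ σ :=
  (((Function.Embedding.subtype _).prodMap (.refl τ)).trans .inr).trans .inl

theorem FamSaturated.unattachedEmbedding_adj (h : FamSaturated 𝓕 (withCopies G T ι))
    {G' : SimpleGraph ((V ⊕ ι × τ) ⊕ σ)} (hle : withCopies G T ι ⊕g U ≤ G')
    (hG' : FamFree 𝓕 G') (i : unattached G') (a : τ) (w : (V ⊕ ι × τ) ⊕ σ) :
    G'.Adj (unattachedEmbedding G' (i, a)) w ↔
      ∃ b, w = unattachedEmbedding G' (i, b) ∧ T.Adj a b := by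
  have hcomap : G'.comap .inl = withCopies G T ι :=
    h.comap_eq hG' .inl fun _ _ hvw => hle hvw
  rcases w with w | u
  · change (G'.comap .inl).Adj (.inr (i, a)) w ↔ _
    rw [hcomap]
    rcases w with w | ⟨k, b⟩ <;>
      simp [unattachedEmbedding, boxProd_adj, eq_comm, and_comm]
  · exact iff_of_false (fun hadj => i.2 u a hadj.symm) (by simp [unattachedEmbedding])

theorem TreeResidue.add_card [Finite τ] [Finite σ] {c : ℕ} (h : TreeResidue 𝓕 T c)
    (hT : T.IsAcyclic) (hK : SmallTreeBound 𝓕 (Nat.card τ) K) (hUT : U ⊑ T)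
    (hU : AbsorbsCopies T U) : TreeResidue 𝓕 T (c + Nat.card σ) := by
  obtain ⟨m, G, hm, hG⟩ := h
  obtain ⟨N, hN, hle⟩ := (hG.and (eventually_ge_atTop
    (K + (Nat.card τ + 2) + Nat.card σ * Nat.card τ * Nat.card τ))).exists
  have hfree : FamFree 𝓕 (withCopies G T (Fin N) ⊕g U) :=
    (hN.famFree.withCopies_of_le_card hT hK (by rw [Nat.card_fin]; omega)).of_isContained
      (withCopies_sum_isContained hUT)
  obtain ⟨G', hG'le, hG'⟩ := hfree.exists_le_famSaturated
  have hunattached : K + 2 ≤ Nat.card (unattached G') := by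
    have := card_le_card_unattached_add
      (hN.card_attached_le hT hK (by rw [Nat.card_fin]; omega) hU hG'le hG'.famFree)
    rw [Nat.card_fin] at this
    omega
  refine (hG'.treeResidue_of_embedding hT hK (unattachedEmbedding G')
    (hN.unattachedEmbedding_adj hG'le hG'.famFree) hunattached).of_modEq ?_
  rw [Nat.card_sum, Nat.card_sum, Nat.card_prod, Nat.card_fin, Nat.card_fin]
  exact .add_right _ (.trans (by simp [Nat.ModEq]) hm)

/-- `T` absorbs copies of itself along some subgraph whose order is coprime to that of `T`. -/
def SelfAbsorbing (T : SimpleGraph τ) : Prop :=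
  ∃ (s : ℕ) (U : SimpleGraph (Fin s)), s.Coprime (Nat.card τ) ∧ U ⊑ T ∧ AbsorbsCopies T U

theorem exists_add_mul_modEq {s r : ℕ} [NeZero r] (hs : s.Coprime r) (c d : ℕ) :
    ∃ k, c + k * s ≡ d [MOD r] := by
  refine ⟨((d - c) * (s : ZMod r)⁻¹ : ZMod r).val, (ZMod.natCast_eq_natCast_iff _ _ _).1 ?_⟩
  push_cast
  rw [ZMod.natCast_zmod_val, mul_assoc, mul_comm _ (s : ZMod r), ZMod.coe_mul_inv_eq_one s hs]
  ring

theorem TreeResidue.of_selfAbsorbing [Finite τ] {c : ℕ} (h : TreeResidue 𝓕 T c)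
    (hT : T.IsTree) (hK : SmallTreeBound 𝓕 (Nat.card τ) K) (hself : SelfAbsorbing T)
    (d : ℕ) : TreeResidue 𝓕 T d := by
  obtain ⟨s, U, hs, hUT, hU⟩ := hself
  have hiter (k : ℕ) : TreeResidue 𝓕 T (c + k * s) := by
    induction k with
    | zero => simpa using h
    | succ k ih => simpa [add_mul, add_assoc] using ih.add_card hT.isAcyclic hK hUT hU
  have := hT.connected.nonempty
  have : NeZero (Nat.card τ) := ⟨Nat.card_pos.ne'⟩
  obtain ⟨k, hk⟩ := exists_add_mul_modEq hs c d
  exact (hiter k).of_modEq hk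

end Absorption

section SmallTrees

variable {V W : Type*} {n m : ℕ}

/-- The graph obtained from `G` by adding a leaf attached to `v`. The leaf is the vertex `0`, and
the vertices of `G` are shifted by one. -/
def addLeaf (G : SimpleGraph (Fin n)) (v : Fin n) : SimpleGraph (Fin (n + 1)) where
  Adj := Fin.cases (Fin.cases False fun b => b = v) fun a => Fin.cases (a = v) fun b => G.Adj a b
  symm := ⟨by intro a b; cases a using Fin.cases <;> cases b using Fin.cases <;> simp [G.adj_comm]⟩
  loopless := ⟨by intro a; cases a using Fin.cases <;> simp⟩

instance (G : SimpleGraph (Fin n)) [DecidableRel G.Adj] (v : Fin n) :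
    DecidableRel (addLeaf G v).Adj :=
  Fin.cases (Fin.cases (.isFalse id) fun b => decEq b v) fun a =>
    Fin.cases (decEq a v) fun b => inferInstanceAs (Decidable (G.Adj a b))

theorem nonempty_addLeaf_iso {G : SimpleGraph (Fin n)} {T : SimpleGraph V} {u v : V}
    (hv : ∀ w, T.Adj v w ↔ w = u) (e : G ≃g T.induce {v}ᶜ) :
    ∃ k, Nonempty (addLeaf G k ≃g T) := by
  classical
  have huv : u ≠ v := ((hv u).2 rfl).ne'
  have hk (a : Fin n) : (e a : V) = u ↔ a = e.symm ⟨u, huv⟩ :=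
    ⟨fun h => (e.symm_apply_apply a).symm.trans (congrArg e.symm (Subtype.ext h)), fun h => by
      rw [h, RelIso.apply_symm_apply]⟩
  let f : Fin (n + 1) ≃ V := (finSuccEquiv n).trans
    ((Equiv.optionCongr e.toEquiv).trans (Equiv.optionSubtypeNe v))
  have hf₀ : f 0 = v := rfl
  have hf (a : Fin n) : f a.succ = e a := rfl
  refine ⟨e.symm ⟨u, huv⟩, ⟨⟨f, fun {a b} => ?_⟩⟩⟩
  cases a using Fin.cases <;> cases b using Fin.cases
  · simp
  · rw [hf₀, hf, hv, hk]
    rfl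
  · rw [hf₀, hf, adj_comm, hv, hk]
    rfl
  · exact e.map_adj_iff

/-- Instructions for building a tree on `Fin (n + 1)` from a single vertex by adding leaves. -/
inductive LeafSeq : ℕ → Type
  | root : LeafSeq 0
  | leaf {n : ℕ} (t : LeafSeq n) (v : Fin (n + 1)) : LeafSeq (n + 1)

namespace LeafSeq

/-- The tree built by `t`. -/
def graph : ∀ {n : ℕ}, LeafSeq n → SimpleGraph (Fin (n + 1))
  | 0, root => ⊥
  | _, leaf t v => addLeaf t.graph v

instance decidableAdj : ∀ {n : ℕ} (t : LeafSeq n), DecidableRel t.graph.Adj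
  | 0, root => fun _ _ => .isFalse id
  | _, leaf t v => have := decidableAdj t; inferInstanceAs (DecidableRel (addLeaf t.graph v).Adj)

/-- Backtracking search for copies of the tree built by `t` in `H`. The first vertex is mapped to an
element of `start`, and the `k`-th leaf after it, attached to a vertex with image `x`, to an element
of `next k x`. -/
def embeddings [DecidableEq W] (H : SimpleGraph W) [DecidableRel H.Adj] (start : List W)
    (next : ℕ → W → List W) : ∀ {n : ℕ}, LeafSeq n → List (Fin (n + 1) → W)
  | 0, root => start.map fun x _ => x
  | n + 1, leaf t v => (embeddings H start next t).flatMap fun f =>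
      ((next (n + 1) (f v)).filter fun y => H.Adj (f v) y ∧ ∀ i, f i ≠ y).map fun y => Fin.cons y f

theorem exists_copy_eq_of_mem_embeddings [DecidableEq W] {H : SimpleGraph W} [DecidableRel H.Adj]
    {start : List W} {next : ℕ → W → List W} {t : LeafSeq n} {f : Fin (n + 1) → W}
    (hf : f ∈ t.embeddings H start next) : ∃ φ : Copy t.graph H, ⇑φ = f := by
  suffices h : f.Injective ∧ ∀ a b, t.graph.Adj a b → H.Adj (f a) (f b) from
    ⟨⟨⟨f, h.2 _ _⟩, h.1⟩, rfl⟩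
  induction t with
  | root => exact ⟨fun _ _ _ => Subsingleton.elim (α := Fin 1) _ _, fun _ _ h => h.elim⟩
  | leaf t v ih =>
    simp only [embeddings, List.mem_flatMap, List.mem_map, List.mem_filter,
      decide_eq_true_eq] at hf
    obtain ⟨g, hg, y, ⟨-, hadj, hne⟩, rfl⟩ := hf
    obtain ⟨hinj, hhom⟩ := ih hg
    refine ⟨Fin.cons_injective_iff.2 ⟨fun ⟨i, hi⟩ => hne i hi, hinj⟩, fun a b hab => ?_⟩
    cases a using Fin.cases <;> cases b using Fin.cases
    · exact hab.elim
    · obtain rfl : _ = v := hab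
      exact hadj.symm
    · obtain rfl : _ = v := hab
      exact hadj
    · exact hhom _ _ hab

/-- The copies of the tree built by `s` in the one built by `t`. -/
def treeEmbeddings (s : LeafSeq m) (t : LeafSeq n) : List (Fin (m + 1) → Fin (n + 1)) :=
  s.embeddings t.graph (List.finRange _) fun _ _ => List.finRange _

theorem isContained_of_treeEmbeddings_ne_nil {s : LeafSeq m} {t : LeafSeq n}
    (h : s.treeEmbeddings t ≠ []) : s.graph ⊑ t.graph := by
  obtain ⟨f, hf⟩ := List.exists_mem_of_ne_nil _ h
  obtain ⟨φ, -⟩ := exists_copy_eq_of_mem_embeddings hf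
  exact ⟨φ⟩

/-- The degrees of the vertices of the tree built by `t`. -/
def degrees : ∀ {n : ℕ}, LeafSeq n → List ℕ
  | 0, root => [0]
  | _, leaf t v => 1 :: t.degrees.modify v (· + 1)

/-- A test for isomorphism. Comparing degrees first avoids most of the searches. -/
def IsoTest (s t : LeafSeq n) : Prop :=
  s.degrees.Perm t.degrees ∧
    ∃ f ∈ s.treeEmbeddings t, ∀ a b, t.graph.Adj (f a) (f b) ↔ s.graph.Adj a b

instance (s t : LeafSeq n) : Decidable (IsoTest s t) := by
  unfold IsoTest
  infer_instance

theorem IsoTest.nonempty_iso {s t : LeafSeq n} (h : IsoTest s t) :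
    Nonempty (s.graph ≃g t.graph) := by
  obtain ⟨-, f, hf, hadj⟩ := h
  obtain ⟨φ, rfl⟩ := exists_copy_eq_of_mem_embeddings hf
  exact ⟨⟨.ofBijective φ (Finite.injective_iff_bijective.1 φ.injective), hadj _ _⟩⟩

/-- Instructions for building every tree of order `n + 1` up to isomorphism. -/
def representatives : ∀ n, List (LeafSeq n)
  | 0 => [root]
  | n + 1 => ((representatives n).flatMap fun t => (List.finRange _).map t.leaf).pwFilter
      fun s t => ¬ IsoTest s t

theorem exists_mem_pwFilter {α : Type*} {R : α → α → Prop} [DecidableRel R] {a : α} {l : List α}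
    (ha : a ∈ l) : ∃ b ∈ l.pwFilter R, a = b ∨ ¬ R a b := by
  induction l with
  | nil => cases ha
  | cons c l ih =>
    by_cases hc : ∀ b ∈ l.pwFilter R, R c b
    · rw [List.pwFilter_cons_of_pos hc]
      rcases List.mem_cons.1 ha with rfl | ha
      · exact ⟨a, List.mem_cons_self, .inl rfl⟩
      · obtain ⟨b, hb, hab⟩ := ih ha
        exact ⟨b, List.mem_cons_of_mem _ hb, hab⟩
    · rw [List.pwFilter_cons_of_neg hc]
      rcases List.mem_cons.1 ha with rfl | ha
      · push Not at hc
        obtain ⟨b, hb, hab⟩ := hc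
        exact ⟨b, hb, .inr hab⟩
      · exact ih ha

theorem exists_mem_representatives_iso {T : SimpleGraph V} (hT : T.IsTree)
    (hcard : Nat.card V = n + 1) : ∃ t ∈ representatives n, Nonempty (t.graph ≃g T) := by
  classical
  induction n generalizing V with
  | zero =>
    obtain ⟨_, ⟨v⟩⟩ := Nat.card_eq_one_iff_unique.1 hcard
    have : Unique V := ⟨⟨v⟩, fun w => Subsingleton.elim w v⟩
    refine ⟨root, List.mem_singleton_self _, ⟨⟨.ofUnique (Fin 1) V, fun {a b} => ?_⟩⟩⟩
    exact iff_of_false (fun h => h.ne (Subsingleton.elim _ _)) id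
  | succ n ih =>
    have : Finite V := Nat.finite_of_card_ne_zero (by omega)
    have := Fintype.ofFinite V
    have : Nontrivial V := Finite.one_lt_card_iff_nontrivial.1 (by omega)
    obtain ⟨v, hv⟩ := hT.exists_vert_degree_one_of_nontrivial
    obtain ⟨u, hvu, huniq⟩ := degree_eq_one_iff_existsUnique_adj.1 hv
    have hT' : (T.induce {v}ᶜ).IsTree :=
      ⟨hT.connected.induce_compl_singleton_of_degree_eq_one hv, hT.isAcyclic.induce _⟩
    have hcard' : Nat.card ↥({v}ᶜ : Set V) = n + 1 := by
      rw [Nat.card_coe_set_eq, Set.ncard_compl, Set.ncard_singleton, hcard, Nat.add_sub_cancel]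
    obtain ⟨s, hs, ⟨e⟩⟩ := ih hT' hcard'
    obtain ⟨k, ⟨e'⟩⟩ := nonempty_addLeaf_iso (fun w => ⟨huniq w, fun hw => hw ▸ hvu⟩) e
    have hmem : s.leaf k ∈ (representatives n).flatMap fun t => (List.finRange _).map t.leaf :=
      List.mem_flatMap.2 ⟨s, hs, List.mem_map_of_mem (List.mem_finRange k)⟩
    obtain ⟨t, ht, hst⟩ := exists_mem_pwFilter (R := fun s t => ¬ IsoTest s t) hmem
    refine ⟨t, ht, ?_⟩
    rcases hst with rfl | hst
    · exact ⟨e'⟩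
    · obtain ⟨i⟩ := (not_not.1 hst).nonempty_iso
      exact ⟨i.symm.trans e'⟩

/-- The candidates for a copy of a tree in `attachCopies` that passes through `u`: from a vertex of
the small graph it continues there or into the `k`-th attached copy, where it then stays or returns
to `u`. -/
def attachedCandidates (u : Fin (m + 1)) (x : Fin (n + 1)) (k : ℕ) :
    Fin (m + 1) ⊕ Fin (n + 1) × Fin (n + 1) → List (Fin (m + 1) ⊕ Fin (n + 1) × Fin (n + 1))
  | .inl _ => (List.finRange _).map .inl ++ [.inr (Fin.ofNat _ k, x)]
  | .inr (i, _) => .inl u :: (List.finRange _).map fun b => .inr (i, b)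

/-- A test for `s` building a tree that witnesses that the tree built by `t` is self-absorbing. -/
def IsAbsorber (s : LeafSeq m) (t : LeafSeq n) : Prop :=
  (m + 1).Coprime (n + 1) ∧ s.treeEmbeddings t ≠ [] ∧
    ∀ u x, ∃ f ∈ t.embeddings (attachCopies s.graph t.graph u x (Fin (n + 1)))
      ((List.finRange _).map .inl ++ (List.finRange _).map fun b => .inr (0, b))
      (attachedCandidates u x), ∃ y, f y = .inl u

instance (s : LeafSeq m) (t : LeafSeq n) : Decidable (IsAbsorber s t) := by
  unfold IsAbsorber
  infer_instance

theorem IsAbsorber.selfAbsorbing {s : LeafSeq m} {t : LeafSeq n} (h : IsAbsorber s t) :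
    SelfAbsorbing t.graph := by
  obtain ⟨hcop, hst, habs⟩ := h
  refine ⟨m + 1, s.graph, by rwa [Nat.card_fin], isContained_of_treeEmbeddings_ne_nil hst,
    fun u x => ?_⟩
  obtain ⟨f, hf, hu⟩ := habs u x
  obtain ⟨φ, rfl⟩ := exists_copy_eq_of_mem_embeddings hf
  exact ⟨φ, hu⟩

/-- The tree on six vertices in which two adjacent vertices have two leaves each. -/
def doubleStar : LeafSeq 5 := leaf (leaf (leaf (leaf (leaf root 0) 1) 2) 2) 3

set_option maxRecDepth 100000 in
theorem isAbsorber_root_or_doubleStar : ∀ n ∈ [0, 1, 2, 3, 4, 6], ∀ t ∈ representatives n,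
    IsAbsorber root t ∨ IsAbsorber doubleStar t := by
  decide +kernel

end LeafSeq

theorem SelfAbsorbing.of_iso {T : SimpleGraph V} {T' : SimpleGraph W} (h : SelfAbsorbing T)
    (e : T ≃g T') : SelfAbsorbing T' := by
  obtain ⟨s, U, hs, hU, habs⟩ := h
  refine ⟨s, U, by rwa [← Nat.card_congr e.toEquiv], hU.trans ⟨e.toCopy⟩, fun u x => ?_⟩
  obtain ⟨f, y, hy⟩ := habs u (e.symm x)
  let F := Sum.map (id : Fin s → Fin s) (Prod.map e e)
  have hF : F.Injective := Function.injective_id.sumMap (e.injective.prodMap e.injective)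
  have hle : attachCopies U T u (e.symm x) V ≤ (attachCopies U T' u x W).comap F := by
    rintro (a | ⟨i, a⟩) (b | ⟨j, b⟩) h
    · exact h
    · exact ⟨h.1, h.2 ▸ e.apply_symm_apply x⟩
    · exact ⟨h.1, h.2 ▸ e.apply_symm_apply x⟩
    · exact ⟨congrArg e h.1, e.map_adj_iff.2 h.2⟩
  let φ : Copy (attachCopies U T u (e.symm x) V) (attachCopies U T' u x W) :=
    ⟨⟨F, fun h => hle h⟩, hF⟩
  exact ⟨(φ.comp f).comp e.symm.toCopy, e y,
    (congrArg (F ∘ f) (e.symm_apply_apply y)).trans (congrArg F hy)⟩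

theorem selfAbsorbing_of_isTree {r : ℕ} (hr : r ∈ ({1, 2, 3, 4, 5, 7} : Set ℕ))
    {T : SimpleGraph (Fin r)} (hT : T.IsTree) : SelfAbsorbing T := by
  obtain ⟨n, hn, rfl⟩ : ∃ n ∈ [0, 1, 2, 3, 4, 6], r = n + 1 := by
    rcases hr with rfl | rfl | rfl | rfl | rfl | rfl <;> simp
  obtain ⟨t, ht, ⟨e⟩⟩ := LeafSeq.exists_mem_representatives_iso hT (Nat.card_fin _)
  exact ((LeafSeq.isAbsorber_root_or_doubleStar n hn t ht).elim
    LeafSeq.IsAbsorber.selfAbsorbing LeafSeq.IsAbsorber.selfAbsorbing).of_iso e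

end SmallTrees

section ResidueClasses

variable {𝓕 : GraphFam} {r : ℕ} {C : Set ℕ}

theorem residueClass_of_mem_treeResidueClasses (hC : C ∈ treeResidueClasses 𝓕 r) :
    ResidueClass r C := by
  obtain ⟨c, hc, rfl, -⟩ := hC
  exact ⟨c, hc, rfl⟩

theorem QuasiFinite.treeResidueClasses_eq_empty_or_eq_all (h : QuasiFinite 𝓕)
    (hr : ∀ T : SimpleGraph (Fin r), T.IsTree → SelfAbsorbing T) :
    treeResidueClasses 𝓕 r = ∅ ∨ treeResidueClasses 𝓕 r = {C | ResidueClass r C} := by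
  obtain hempty | ⟨C, c, -, -, T, hT, hTc⟩ := (treeResidueClasses 𝓕 r).eq_empty_or_nonempty
  · exact .inl hempty
  · obtain ⟨K, hK⟩ := h.exists_smallTreeBound (Nat.card (Fin r))
    refine .inr (Set.Subset.antisymm (fun _ => residueClass_of_mem_treeResidueClasses) ?_)
    rintro _ ⟨d, hd, rfl⟩
    exact ⟨d, hd, rfl, T, hT, hTc.of_selfAbsorbing hT hK (hr T hT) d⟩

end ResidueClasses

/-- Structure of `sat(n,𝓕)` in the sparse regime, for quasi-finite families. -/
theorem stmt9 (𝓕 : GraphFam) (h1 : 𝓕.Nonempty) (h2 : ∀ F ∈ 𝓕, 1 ≤ Nat.card F.2.edgeSet)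
    (h3 : QuasiFinite 𝓕) :
    ∃ (S : ℕ → Set (Set ℕ)) (k : ℕ → Set ℕ → ℤ),
      (∀ r : ℕ, 1 ≤ r → ∀ C ∈ S r, ResidueClass r C) ∧
      -- (a)
      (∀ r : ℕ, 1 ≤ r → ∀ C ∈ S r,
        ∀ᶠ n : ℕ in atTop,
          (n ∈ C ∧ ∀ q : ℕ, 1 ≤ q → q < r → ∀ D ∈ S q, n ∉ D) →
            (sat n 𝓕 : ℤ) * r = ((r : ℤ) - 1) * n + k r C) ∧
      -- (b)
      (∃ g : ℕ → ℝ, Tendsto (fun n : ℕ => g n / n) atTop (𝓝 0) ∧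
        ∀ n : ℕ, (∀ r : ℕ, 1 ≤ r → ∀ C ∈ S r, n ∉ C) → (n : ℝ) - g n ≤ (sat n 𝓕 : ℝ)) ∧
      -- (c)
      (∀ r ∈ ({1, 2, 3, 4, 5, 7} : Set ℕ), S r = ∅ ∨ S r = {C | ResidueClass r C}) := by
  choose! k hk using fun (r : ℕ) (C : Set ℕ) (h : 1 ≤ r ∧ C ∈ treeResidueClasses 𝓕 r) =>
    exists_eventually_satExcess_eq h2 h3 h.1 h.2
  refine ⟨treeResidueClasses 𝓕, k, fun r _ C => residueClass_of_mem_treeResidueClasses, ?_, ?_, ?_⟩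
  · intro r hr C hC
    filter_upwards [hk r C ⟨hr, hC⟩] with n hn ⟨hnC, havoid⟩
    rw [← hn hnC havoid, satExcess]
    ring
  · obtain ⟨g, hg, hsat⟩ := exists_sublinear_deficit h2 h3
    exact ⟨g, hg, fun n hn => hsat n fun r q hq _ => hn q hq⟩
  · exact fun r hr => h3.treeResidueClasses_eq_empty_or_eq_all fun T => selfAbsorbing_of_isTree hr
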